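/- arXiv:0905.1489 — 2 statements merged into one kernel-verified Lean document; each statement's English description precedes it below -/
import Mathlib

section
/- Let f : (C₁, δ₁, β₁) → (C₂, δ₂, β₂) be a morphism of mixed complexes over κ. If the induced maps H^n(f) : H^n(C₁, δ₁) → H^n(C₂, δ₂) and H_n(f) : H_n(C₁, β₁) → H_n(C₂, β₂) are isomorphisms for every n, then the induced map ^−H^r_β(f) : ^−H^r_β(C₁) → ^−H^r_β(C₂) is an isomorphism for every r. -/
open LinearMap DirectSum

namespace CDGA

variable {κ : Type} [Field κ]

/-- Cast along an equality of indices. -/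
def fcast {ι : Type} {C : ι → Type} [∀ i, AddCommGroup (C i)] [∀ i, Module κ (C i)]
    {m n : ι} (h : m = n) : C m →ₗ[κ] C n := by subst h; exact LinearMap.id

section CohomologyDefs

variable {C : ℤ → Type} [∀ n, AddCommGroup (C n)] [∀ n, Module κ (C n)]

/-- Cocycles of a cochain complex. -/
def cocycles (d : ∀ n : ℤ, C n →ₗ[κ] C (n + 1)) (r : ℤ) : Submodule κ (C r) :=
  LinearMap.ker (d r)

/-- Coboundaries of a cochain complex. -/
def cobound (d : ∀ n : ℤ, C n →ₗ[κ] C (n + 1)) (r : ℤ) : Submodule κ (C r) :=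
  LinearMap.range ((fcast (show r - 1 + 1 = r by ring)).comp (d (r - 1)))

/-- Cohomology of a cochain complex in degree `r`. -/
abbrev cohomology (d : ∀ n : ℤ, C n →ₗ[κ] C (n + 1)) (r : ℤ) : Type :=
  ↥(cocycles d r) ⧸ (cobound d r).comap (cocycles d r).subtype

/-- Cycles of a chain complex (degree `-1` differential). -/
def bcycles (d : ∀ n : ℤ, C n →ₗ[κ] C (n - 1)) (r : ℤ) : Submodule κ (C r) :=
  LinearMap.ker (d r)

/-- Boundaries of a chain complex. -/
def bbound (d : ∀ n : ℤ, C n →ₗ[κ] C (n - 1)) (r : ℤ) : Submodule κ (C r) :=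
  LinearMap.range ((fcast (show r + 1 - 1 = r by ring)).comp (d (r + 1)))

/-- Homology of a chain complex in degree `r`. -/
abbrev homologyC (d : ∀ n : ℤ, C n →ₗ[κ] C (n - 1)) (r : ℤ) : Type :=
  ↥(bcycles d r) ⧸ (bbound d r).comap (bcycles d r).subtype

end CohomologyDefs

section InducedMaps

variable {C₁ C₂ : ℤ → Type}
  [∀ n, AddCommGroup (C₁ n)] [∀ n, Module κ (C₁ n)]
  [∀ n, AddCommGroup (C₂ n)] [∀ n, Module κ (C₂ n)]

open Classical in
/-- The map induced on cohomology by a linear map `g` from the degree-`a` part of the first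
complex to the degree-`b` part of the second complex.  (If `g` is not compatible with the
differentials, this is the junk value `0`.) -/
noncomputable def Hmap₂ (d₁ : ∀ n : ℤ, C₁ n →ₗ[κ] C₁ (n + 1)) (d₂ : ∀ n : ℤ, C₂ n →ₗ[κ] C₂ (n + 1))
    (a b : ℤ) (g : C₁ a →ₗ[κ] C₂ b) : cohomology d₁ a →ₗ[κ] cohomology d₂ b :=
  if h : cocycles d₁ a ≤ (cocycles d₂ b).comap g ∧ cobound d₁ a ≤ (cobound d₂ b).comap g then
    Submodule.mapQ _ _ (g.restrict fun x hx => h.1 hx)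
      (fun x hx => by
        have hg : g ↑x ∈ cobound d₂ b := h.2 hx
        simpa [Submodule.mem_comap, LinearMap.restrict_apply] using hg)
  else 0

open Classical in
/-- The map induced on homology by a linear map `g` from the degree-`a` part of the first
chain complex to the degree-`b` part of the second chain complex.  (Junk value `0` if `g` is
not compatible with the differentials.) -/
noncomputable def hMap₂ (d₁ : ∀ n : ℤ, C₁ n →ₗ[κ] C₁ (n - 1)) (d₂ : ∀ n : ℤ, C₂ n →ₗ[κ] C₂ (n - 1))
    (a b : ℤ) (g : C₁ a →ₗ[κ] C₂ b) : homologyC d₁ a →ₗ[κ] homologyC d₂ b :=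
  if h : bcycles d₁ a ≤ (bcycles d₂ b).comap g ∧ bbound d₁ a ≤ (bbound d₂ b).comap g then
    Submodule.mapQ _ _ (g.restrict fun x hx => h.1 hx)
      (fun x hx => by
        have hg : g ↑x ∈ bbound d₂ b := h.2 hx
        simpa [Submodule.mem_comap, LinearMap.restrict_apply] using hg)
  else 0

end InducedMaps

/-- A mixed complex over `κ`: non-negatively graded vector spaces with a degree `+1`
exterior differential `δ` and a degree `-1` interior differential `β` satisfying
`δδ = 0`, `ββ = 0` and `βδ + δβ = 0`. -/
structure Mixed (κ : Type) [Field κ] : Type 1 where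
  C : ℤ → Type
  [acg : ∀ n, AddCommGroup (C n)]
  [mod : ∀ n, Module κ (C n)]
  trivNeg : ∀ n : ℤ, n < 0 → Subsingleton (C n)
  δ : ∀ n : ℤ, C n →ₗ[κ] C (n + 1)
  β : ∀ n : ℤ, C n →ₗ[κ] C (n - 1)
  δδ : ∀ (n : ℤ) (x : C n), δ (n + 1) (δ n x) = 0
  ββ : ∀ (n : ℤ) (x : C n), β (n - 1) (β n x) = 0
  βδ : ∀ (n : ℤ) (x : C n),
    fcast (κ := κ) (show n + 1 - 1 = n by ring) (β (n + 1) (δ n x))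
      + fcast (κ := κ) (show n - 1 + 1 = n by ring) (δ (n - 1) (β n x)) = 0

attribute [instance] Mixed.acg Mixed.mod

/-- `^+C^r := ∏_{k ≥ 0} C^{r-2k}`. -/
abbrev plusC (M : Mixed κ) (r : ℤ) : Type := ∀ k : ℕ, M.C (r - 2 * (k : ℤ))

/-- `^-C^r := ∏_{k ≥ 0} C^{r+2k}`. -/
abbrev minusC (M : Mixed κ) (r : ℤ) : Type := ∀ k : ℕ, M.C (r + 2 * (k : ℤ))

/-- `𝕡C^r := ∏_{m ≡ r mod 2} C^m` (the components with `m < 0` are trivial). -/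
abbrev pprodC (M : Mixed κ) (r : ℤ) : Type := ∀ n : {m : ℤ // m % 2 = r % 2}, M.C n.1

/-- `PC^r := ⊕_{m ≡ r mod 2} C^m` (the components with `m < 0` are trivial). -/
abbrev pC (M : Mixed κ) (r : ℤ) : Type := ⨁ n : {m : ℤ // m % 2 = r % 2}, M.C n.1

/-- Components of the differential `^+D_β`. -/
def plusDComp (M : Mixed κ) (r : ℤ) : ∀ k : ℕ, plusC M r →ₗ[κ] M.C (r + 1 - 2 * (k : ℤ))
  | 0 =>
      (fcast (show r - 2 * ((0:ℕ) : ℤ) + 1 = r + 1 - 2 * ((0:ℕ) : ℤ) by push_cast; ring)).comp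
        ((M.δ (r - 2 * ((0:ℕ) : ℤ))).comp (LinearMap.proj 0))
  | (k + 1) =>
      (fcast (show r - 2 * ((k + 1 : ℕ) : ℤ) + 1 = r + 1 - 2 * ((k + 1 : ℕ) : ℤ) by push_cast; ring)).comp
        ((M.δ (r - 2 * ((k + 1 : ℕ) : ℤ))).comp (LinearMap.proj (k + 1)))
      + (fcast (show r - 2 * ((k : ℕ) : ℤ) - 1 = r + 1 - 2 * ((k + 1 : ℕ) : ℤ) by push_cast; ring)).comp
        ((M.β (r - 2 * ((k : ℕ) : ℤ))).comp (LinearMap.proj k))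

/-- The differential of the cochain complex `^+C_β`. -/
def plusD (M : Mixed κ) (r : ℤ) : plusC M r →ₗ[κ] plusC M (r + 1) :=
  LinearMap.pi (plusDComp M r)

/-- The differential of the chain complex `(^+C, ^+D^δ)`. -/
def plusDelta (M : Mixed κ) (r : ℤ) : plusC M r →ₗ[κ] plusC M (r - 1) :=
  LinearMap.pi fun k : ℕ =>
    (fcast (show r - 2 * ((k : ℕ) : ℤ) - 1 = r - 1 - 2 * ((k : ℕ) : ℤ) by ring)).comp
      ((M.β (r - 2 * ((k : ℕ) : ℤ))).comp (LinearMap.proj k))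
    + (fcast (show r - 2 * ((k + 1 : ℕ) : ℤ) + 1 = r - 1 - 2 * ((k : ℕ) : ℤ) by push_cast; ring)).comp
      ((M.δ (r - 2 * ((k + 1 : ℕ) : ℤ))).comp (LinearMap.proj (k + 1)))

/-- The differential of the cochain complex `^-C_β`. -/
def minusD (M : Mixed κ) (r : ℤ) : minusC M r →ₗ[κ] minusC M (r + 1) :=
  LinearMap.pi fun k : ℕ =>
    (fcast (show r + 2 * ((k + 1 : ℕ) : ℤ) - 1 = r + 1 + 2 * ((k : ℕ) : ℤ) by push_cast; ring)).comp
      ((M.β (r + 2 * ((k + 1 : ℕ) : ℤ))).comp (LinearMap.proj (k + 1)))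
    + (fcast (show r + 2 * ((k : ℕ) : ℤ) + 1 = r + 1 + 2 * ((k : ℕ) : ℤ) by ring)).comp
      ((M.δ (r + 2 * ((k : ℕ) : ℤ))).comp (LinearMap.proj k))

/-- The differential of the `2`-periodic cochain complex `𝕡C`. -/
def pprodD (M : Mixed κ) (r : ℤ) : pprodC M r →ₗ[κ] pprodC M (r + 1) :=
  LinearMap.pi fun n : {m : ℤ // m % 2 = (r + 1) % 2} =>
    (fcast (show n.1 - 1 + 1 = n.1 by ring)).comp
      ((M.δ (n.1 - 1)).comp
        (LinearMap.proj (⟨n.1 - 1, by have := n.2; omega⟩ : {m : ℤ // m % 2 = r % 2})))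
    + (fcast (show n.1 + 1 - 1 = n.1 by ring)).comp
      ((M.β (n.1 + 1)).comp
        (LinearMap.proj (⟨n.1 + 1, by have := n.2; omega⟩ : {m : ℤ // m % 2 = r % 2})))

/-- The differential of the `2`-periodic cochain complex `PC` (direct sum version). -/
noncomputable def pD (M : Mixed κ) (r : ℤ) : pC M r →ₗ[κ] pC M (r + 1) :=
  DirectSum.toModule κ {m : ℤ // m % 2 = r % 2} (pC M (r + 1)) fun n =>
    ((DirectSum.lof κ {m : ℤ // m % 2 = (r + 1) % 2} (fun m => M.C m.1)
        ⟨n.1 + 1, by have := n.2; omega⟩).comp (M.δ n.1))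
    + ((DirectSum.lof κ {m : ℤ // m % 2 = (r + 1) % 2} (fun m => M.C m.1)
        ⟨n.1 - 1, by have := n.2; omega⟩).comp (M.β n.1))

end CDGA

namespace CDGA

variable {κ : Type} [Field κ]

section MorphismInduced

variable {M₁ M₂ : Mixed κ}

/-- The map induced by a morphism of mixed complexes on `^+C`. -/
def plusMap (f : ∀ n : ℤ, M₁.C n →ₗ[κ] M₂.C n) (r : ℤ) : plusC M₁ r →ₗ[κ] plusC M₂ r :=
  LinearMap.pi fun k : ℕ => (f (r - 2 * (k : ℤ))).comp (LinearMap.proj k)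

/-- The map induced by a morphism of mixed complexes on `^-C`. -/
def minusMap (f : ∀ n : ℤ, M₁.C n →ₗ[κ] M₂.C n) (r : ℤ) : minusC M₁ r →ₗ[κ] minusC M₂ r :=
  LinearMap.pi fun k : ℕ => (f (r + 2 * (k : ℤ))).comp (LinearMap.proj k)

/-- The map induced by a morphism of mixed complexes on `𝕡C`. -/
def pprodMap (f : ∀ n : ℤ, M₁.C n →ₗ[κ] M₂.C n) (r : ℤ) : pprodC M₁ r →ₗ[κ] pprodC M₂ r :=
  LinearMap.pi fun n : {m : ℤ // m % 2 = r % 2} => (f n.1).comp (LinearMap.proj n)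

/-- The map induced by a morphism of mixed complexes on `PC`. -/
noncomputable def pMap (f : ∀ n : ℤ, M₁.C n →ₗ[κ] M₂.C n) (r : ℤ) : pC M₁ r →ₗ[κ] pC M₂ r :=
  DirectSum.toModule κ {m : ℤ // m % 2 = r % 2} (pC M₂ r) fun n =>
    (DirectSum.lof κ {m : ℤ // m % 2 = r % 2} (fun m => M₂.C m.1) n).comp (f n.1)

end MorphismInduced

/-- Components of the canonical inclusion `^+C^a → ^+C^{a+2} = ^+C^b`,
`(ω_a, ω_{a-2}, …) ↦ (0, ω_a, ω_{a-2}, …)`. -/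
def inclS2Comp (M : Mixed κ) (a b : ℤ) (h : a + 2 = b) :
    ∀ k : ℕ, plusC M a →ₗ[κ] M.C (b - 2 * (k : ℤ))
  | 0 => 0
  | (j + 1) =>
      (fcast (show a - 2 * ((j : ℕ) : ℤ) = b - 2 * ((j + 1 : ℕ) : ℤ) by push_cast; omega)).comp
        (LinearMap.proj j)

/-- The canonical inclusion `i : ^+C^a → ^+C^b` (for `b = a + 2`). -/
def inclS2 (M : Mixed κ) (a b : ℤ) (h : a + 2 = b) : plusC M a →ₗ[κ] plusC M b :=
  LinearMap.pi (inclS2Comp M a b h)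

/-- The projection `π : ^+C^r → C^r` onto the top component. -/
def topProj (M : Mixed κ) (r : ℤ) : plusC M r →ₗ[κ] M.C r :=
  (fcast (show r - 2 * ((0:ℕ) : ℤ) = r by push_cast; ring)).comp (LinearMap.proj 0)

/-- The canonical projection `^+C^a → ^+C^{a-2} = ^+C^b` dropping the top component. -/
def projS2 (M : Mixed κ) (a b : ℤ) (h : b + 2 = a) : plusC M a →ₗ[κ] plusC M b :=
  LinearMap.pi fun k : ℕ =>
    (fcast (show a - 2 * ((k + 1 : ℕ) : ℤ) = b - 2 * ((k : ℕ) : ℤ) by push_cast; omega)).comp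
      (LinearMap.proj (k + 1))

/-- The canonical inclusion `I : ^+C^{r-2} → 𝕡C^r` (placing the component of
degree `r - 2 - 2j` in degree `r - 2 - 2j`). -/
def inclPprod (M : Mixed κ) (r : ℤ) : plusC M (r - 2) →ₗ[κ] pprodC M r :=
  LinearMap.pi fun n : {m : ℤ // m % 2 = r % 2} =>
    if h : n.1 ≤ r - 2 then
      (fcast (show r - 2 - 2 * ((((r - 2 - n.1) / 2).toNat : ℕ) : ℤ) = n.1 by
          have := n.2; omega)).comp
        (LinearMap.proj (((r - 2 - n.1) / 2).toNat))
    else 0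

/-- The canonical projection `p : 𝕡C^r → ^-C^r` onto the components of degree `≥ r`. -/
def projMinus (M : Mixed κ) (r : ℤ) : pprodC M r →ₗ[κ] minusC M r :=
  LinearMap.pi fun j : ℕ =>
    LinearMap.proj (⟨r + 2 * (j : ℤ), by omega⟩ : {m : ℤ // m % 2 = r % 2})

/-- Reindexing (periodicity) isomorphism between the `2`-periodic complexes `PC^a` and
`PC^b` for `a ≡ b mod 2`. -/
noncomputable def reindexP (M : Mixed κ) (a b : ℤ) (h : a % 2 = b % 2) :
    pC M a →ₗ[κ] pC M b :=
  DirectSum.toModule κ {m : ℤ // m % 2 = a % 2} (pC M b) fun n =>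
    DirectSum.lof κ {m : ℤ // m % 2 = b % 2} (fun m => M.C m.1) ⟨n.1, by have := n.2; omega⟩

/-- The canonical map `^+C^m → PC^m` (the components of negative degree are trivial and
are sent to `0`). -/
noncomputable def inclPlusP (M : Mixed κ) (m : ℤ) : plusC M m →ₗ[κ] pC M m :=
  ∑ j ∈ Finset.range (m.toNat + 1),
    (DirectSum.lof κ {x : ℤ // x % 2 = m % 2} (fun x => M.C x.1)
        ⟨m - 2 * (j : ℤ), by omega⟩).comp
      (LinearMap.proj j)

section Psi

variable (M : Mixed κ) (Ψ : ℤ → ∀ n : ℤ, M.C n →ₗ[κ] M.C n)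

/-- The endomorphism `^+Ψ_k` of `^+C^r`: the component of degree `r - 2j` is scaled
by `k^{-j}`. -/
noncomputable def plusPsi (k : ℤ) (r : ℤ) : plusC M r →ₗ[κ] plusC M r :=
  LinearMap.pi fun j : ℕ =>
    (((k : κ)⁻¹) ^ (j : ℕ)) • ((Ψ k (r - 2 * (j : ℤ))).comp (LinearMap.proj j))

/-- The endomorphism `^-Ψ_k` of `^-C^r`: the component of degree `r + 2j` is scaled
by `k^j`. -/
noncomputable def minusPsi (k : ℤ) (r : ℤ) : minusC M r →ₗ[κ] minusC M r :=
  LinearMap.pi fun j : ℕ =>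
    ((k : κ) ^ (j : ℕ)) • ((Ψ k (r + 2 * (j : ℤ))).comp (LinearMap.proj j))

/-- The endomorphism `𝕡Ψ_k` of `𝕡C^r`: the component of degree `r + 2j` (`j ∈ ℤ`) is
scaled by `k^j`. -/
noncomputable def pprodPsi (k : ℤ) (r : ℤ) : pprodC M r →ₗ[κ] pprodC M r :=
  LinearMap.pi fun n : {m : ℤ // m % 2 = r % 2} =>
    ((k : κ) ^ ((n.1 - r) / 2)) • ((Ψ k n.1).comp (LinearMap.proj n))

end Psi

/-- The map `Φ((a_k)_k) = (a_k - S_k(a_{k+1}))_k` associated to an inverse system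
of vector spaces; its kernel is `lim` and its cokernel is `lim¹`. -/
def phiMap {A : ℕ → Type} [∀ i, AddCommGroup (A i)] [∀ i, Module κ (A i)]
    (S : ∀ i : ℕ, A (i + 1) →ₗ[κ] A i) : (∀ i, A i) →ₗ[κ] (∀ i, A i) :=
  LinearMap.pi fun i : ℕ => LinearMap.proj i - (S i).comp (LinearMap.proj (i + 1))

end CDGA

namespace CDGA

theorem fcast_fun {κ ι : Type} [Field κ] {C : ι → Type} [∀ i, AddCommGroup (C i)]
    [∀ i, Module κ (C i)] (g : ∀ i, C i) {i j : ι} (h : i = j) :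
    fcast (κ := κ) h (g i) = g j := by subst h; rfl

theorem fcast_inj {κ ι : Type} [Field κ] {C : ι → Type} [∀ i, AddCommGroup (C i)]
    [∀ i, Module κ (C i)] {i j : ι} (h : i = j) (x : C i)
    (hx : fcast (κ := κ) h x = 0) : x = 0 := by subst h; exact hx

section Bij

variable {κ : Type} [Field κ] {C₁ C₂ : ℤ → Type}
  [∀ n, AddCommGroup (C₁ n)] [∀ n, Module κ (C₁ n)]
  [∀ n, AddCommGroup (C₂ n)] [∀ n, Module κ (C₂ n)]

theorem mapQ_bij {V W : Type} [AddCommGroup V] [Module κ V] [AddCommGroup W] [Module κ W]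
    (Z₁ B₁ : Submodule κ V) (Z₂ B₂ : Submodule κ W) (g : V →ₗ[κ] W)
    (hZ : ∀ x ∈ Z₁, g x ∈ Z₂)
    (hB : B₁.comap Z₁.subtype ≤ (B₂.comap Z₂.subtype).comap (g.restrict hZ)) :
    Function.Bijective (Submodule.mapQ _ _ (g.restrict hZ) hB) ↔
      (∀ x ∈ Z₁, g x ∈ B₂ → x ∈ B₁) ∧ (∀ y ∈ Z₂, ∃ x ∈ Z₁, y - g x ∈ B₂) := by
  constructor
  · rintro ⟨hi, hs⟩
    constructor
    · intro x hx hgx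
      have h0 : Submodule.mapQ _ _ (g.restrict hZ) hB (Submodule.Quotient.mk ⟨x, hx⟩) = 0 := by
        rw [Submodule.mapQ_apply, Submodule.Quotient.mk_eq_zero]
        exact hgx
      have h1 := (injective_iff_map_eq_zero _).1 hi _ h0
      rw [Submodule.Quotient.mk_eq_zero] at h1
      exact h1
    · intro y hy
      obtain ⟨q, hq⟩ := hs (Submodule.Quotient.mk ⟨y, hy⟩)
      obtain ⟨x, rfl⟩ := Submodule.Quotient.mk_surjective _ q
      rw [Submodule.mapQ_apply] at hq
      have h2 := (Submodule.Quotient.eq _).1 hq.symm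
      exact ⟨x.1, x.2, h2⟩
  · rintro ⟨hi, hs⟩
    constructor
    · rw [injective_iff_map_eq_zero]
      intro q hq
      obtain ⟨x, rfl⟩ := Submodule.Quotient.mk_surjective _ q
      rw [Submodule.mapQ_apply, Submodule.Quotient.mk_eq_zero] at hq
      rw [Submodule.Quotient.mk_eq_zero]
      exact hi x.1 x.2 hq
    · intro q
      obtain ⟨y, rfl⟩ := Submodule.Quotient.mk_surjective _ q
      obtain ⟨x, hx, hxy⟩ := hs y.1 y.2
      refine ⟨Submodule.Quotient.mk ⟨x, hx⟩, ?_⟩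
      rw [Submodule.mapQ_apply]
      refine ((Submodule.Quotient.eq _).2 ?_).symm
      exact hxy

theorem Hmap_bij (d₁ : ∀ n : ℤ, C₁ n →ₗ[κ] C₁ (n + 1)) (d₂ : ∀ n : ℤ, C₂ n →ₗ[κ] C₂ (n + 1))
    (f : ∀ n, C₁ n →ₗ[κ] C₂ n) (hf : ∀ n x, d₂ n (f n x) = f (n + 1) (d₁ n x)) (a : ℤ) :
    Function.Bijective (Hmap₂ d₁ d₂ a a (f a)) ↔
      (∀ x ∈ cocycles d₁ a, f a x ∈ cobound d₂ a → x ∈ cobound d₁ a) ∧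
      (∀ y ∈ cocycles d₂ a, ∃ x ∈ cocycles d₁ a, y - f a x ∈ cobound d₂ a) := by
  have h : cocycles d₁ a ≤ (cocycles d₂ a).comap (f a) ∧
      cobound d₁ a ≤ (cobound d₂ a).comap (f a) := by
    constructor
    · intro x hx
      have hx' : d₁ a x = 0 := hx
      show d₂ a (f a x) = 0
      rw [hf, hx', map_zero]
    · rintro x ⟨y, rfl⟩
      refine ⟨f (a - 1) y, ?_⟩
      simp only [LinearMap.comp_apply, hf]
      have key : ∀ (i j : ℤ) (h : i = j) (z : C₁ i),
          fcast (κ := κ) h (f i z) = f j (fcast (κ := κ) h z) := by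
        intro i j h z; subst h; rfl
      exact key _ _ _ _
  unfold Hmap₂
  rw [dif_pos h]
  exact mapQ_bij _ _ _ _ _ _ _

theorem hMap_bij (d₁ : ∀ n : ℤ, C₁ n →ₗ[κ] C₁ (n - 1)) (d₂ : ∀ n : ℤ, C₂ n →ₗ[κ] C₂ (n - 1))
    (f : ∀ n, C₁ n →ₗ[κ] C₂ n) (hf : ∀ n x, d₂ n (f n x) = f (n - 1) (d₁ n x)) (a : ℤ) :
    Function.Bijective (hMap₂ d₁ d₂ a a (f a)) ↔
      (∀ x ∈ bcycles d₁ a, f a x ∈ bbound d₂ a → x ∈ bbound d₁ a) ∧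
      (∀ y ∈ bcycles d₂ a, ∃ x ∈ bcycles d₁ a, y - f a x ∈ bbound d₂ a) := by
  have h : bcycles d₁ a ≤ (bcycles d₂ a).comap (f a) ∧
      bbound d₁ a ≤ (bbound d₂ a).comap (f a) := by
    constructor
    · intro x hx
      have hx' : d₁ a x = 0 := hx
      show d₂ a (f a x) = 0
      rw [hf, hx', map_zero]
    · rintro x ⟨y, rfl⟩
      refine ⟨f (a + 1) y, ?_⟩
      simp only [LinearMap.comp_apply, hf]
      have key : ∀ (i j : ℤ) (h : i = j) (z : C₁ i),
          fcast (κ := κ) h (f i z) = f j (fcast (κ := κ) h z) := by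
        intro i j h z; subst h; rfl
      exact key _ _ _ _
  unfold hMap₂
  rw [dif_pos h]
  exact mapQ_bij _ _ _ _ _ _ _

end Bij

section Filt

variable {κ : Type} [Field κ] {C₁ C₂ : ℤ → Type}
  [∀ n, AddCommGroup (C₁ n)] [∀ n, Module κ (C₁ n)]
  [∀ n, AddCommGroup (C₂ n)] [∀ n, Module κ (C₂ n)]

/-- Pairs of families vanishing on prescribed index sets. -/
def FS (κ : Type) [Field κ] (C₁ C₂ : ℤ → Type)
    [∀ n, AddCommGroup (C₁ n)] [∀ n, Module κ (C₁ n)]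
    [∀ n, AddCommGroup (C₂ n)] [∀ n, Module κ (C₂ n)] (P Q : ℤ → Prop) :
    Submodule κ ((∀ m, C₁ m) × (∀ m, C₂ m)) where
  carrier := {z | (∀ m, P m → z.1 m = 0) ∧ (∀ m, Q m → z.2 m = 0)}
  add_mem' := by
    rintro a b ⟨h1, h2⟩ ⟨h3, h4⟩
    exact ⟨fun m hm => by simp [h1 m hm, h3 m hm], fun m hm => by simp [h2 m hm, h4 m hm]⟩
  zero_mem' := ⟨fun _ _ => rfl, fun _ _ => rfl⟩
  smul_mem' := by
    rintro c a ⟨h1, h2⟩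
    exact ⟨fun m hm => by simp [h1 m hm], fun m hm => by simp [h2 m hm]⟩

theorem FS_lim (P Q : ℕ → ℤ → Prop)
    (hP : ∀ n m, P n m → P (n + 1) m) (hQ : ∀ n m, Q n m → Q (n + 1) m)
    (hP' : ∀ m, ∃ n, P n m) (hQ' : ∀ m, ∃ n, Q n m)
    (w : ℕ → (∀ m, C₁ m) × (∀ m, C₂ m))
    (hw : ∀ n, w (n + 1) - w n ∈ FS κ C₁ C₂ (P n) (Q n)) :
    ∃ u, ∀ n, u - w n ∈ FS κ C₁ C₂ (P n) (Q n) := by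
  choose p hp using hP'
  choose q hq using hQ'
  have h1 : ∀ m a k, P a m → P (a + k) m ∧ (w (a + k)).1 m = (w a).1 m := by
    intro m a k ha
    induction k with
    | zero => exact ⟨ha, rfl⟩
    | succ k ih =>
      refine ⟨hP _ _ ih.1, ?_⟩
      have := (hw (a + k)).1 m ih.1
      rw [← ih.2]
      exact sub_eq_zero.1 this
  have h2 : ∀ m a k, Q a m → Q (a + k) m ∧ (w (a + k)).2 m = (w a).2 m := by
    intro m a k ha
    induction k with
    | zero => exact ⟨ha, rfl⟩
    | succ k ih =>
      refine ⟨hQ _ _ ih.1, ?_⟩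
      have := (hw (a + k)).2 m ih.1
      rw [← ih.2]
      exact sub_eq_zero.1 this
  refine ⟨(fun m => (w (p m)).1 m, fun m => (w (q m)).2 m), fun n => ⟨fun m hm => ?_, fun m hm => ?_⟩⟩
  · show (w (p m)).1 m - (w n).1 m = 0
    rw [sub_eq_zero, ← (h1 m (p m) n (hp m)).2, ← (h1 m n (p m) hm).2, add_comm]
  · show (w (q m)).2 m - (w n).2 m = 0
    rw [sub_eq_zero, ← (h2 m (q m) n (hq m)).2, ← (h2 m n (q m) hm).2, add_comm]

theorem FS_solve (P Q : ℕ → ℤ → Prop)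
    (hP : ∀ n m, P n m → P (n + 1) m) (hQ : ∀ n m, Q n m → Q (n + 1) m)
    (hP' : ∀ m, ∃ n, P n m) (hQ' : ∀ m, ∃ n, Q n m)
    (D : ((∀ m, C₁ m) × (∀ m, C₂ m)) →ₗ[κ] ((∀ m, C₁ m) × (∀ m, C₂ m)))
    (hDD : ∀ z, D (D z) = 0)
    (hDF : ∀ n z, z ∈ FS κ C₁ C₂ (P (n + 1)) (Q (n + 1)) → D z ∈ FS κ C₁ C₂ (P n) (Q n))
    (hstep : ∀ n z, z ∈ FS κ C₁ C₂ (P n) (Q n) → D z = 0 →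
      ∃ w ∈ FS κ C₁ C₂ (P (n + 1)) (Q (n + 1)), z - D w ∈ FS κ C₁ C₂ (P (n + 1)) (Q (n + 1)))
    (z : (∀ m, C₁ m) × (∀ m, C₂ m)) (hz : z ∈ FS κ C₁ C₂ (P 0) (Q 0)) (hDz : D z = 0) :
    ∃ w ∈ FS κ C₁ C₂ (P 1) (Q 1), z = D w := by
  have step' : ∀ n z, ∃ w, z ∈ FS κ C₁ C₂ (P n) (Q n) → D z = 0 →
      w ∈ FS κ C₁ C₂ (P (n + 1)) (Q (n + 1)) ∧
        z - D w ∈ FS κ C₁ C₂ (P (n + 1)) (Q (n + 1)) := by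
    intro n z
    by_cases h : z ∈ FS κ C₁ C₂ (P n) (Q n) ∧ D z = 0
    · obtain ⟨w, hw⟩ := hstep n z h.1 h.2
      exact ⟨w, fun _ _ => hw⟩
    · exact ⟨0, fun h1 h2 => absurd ⟨h1, h2⟩ h⟩
  choose g hg using step'
  let w : ℕ → (∀ m, C₁ m) × (∀ m, C₂ m) := fun n =>
    Nat.rec 0 (fun n u => u + g n (z - D u)) n
  have hw1 : ∀ n, w (n + 1) = w n + g n (z - D (w n)) := fun n => rfl
  have hc : ∀ n, D (z - D (w n)) = 0 := fun n => by rw [map_sub, hDz, hDD, sub_zero]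
  have hin : ∀ n, z - D (w n) ∈ FS κ C₁ C₂ (P n) (Q n) := by
    intro n
    induction n with
    | zero =>
      have : w 0 = 0 := rfl
      rw [this, map_zero, sub_zero]; exact hz
    | succ n ih =>
      have := (hg n _ ih (hc n)).2
      rw [hw1, map_add, ← sub_sub]; exact this
  obtain ⟨u, hu⟩ := FS_lim (κ := κ) (fun n => P (n + 1)) (fun n => Q (n + 1))
    (fun n => hP _) (fun n => hQ _)
    (fun m => (hP' m).imp fun n h => hP _ _ h) (fun m => (hQ' m).imp fun n h => hQ _ _ h) w
    (fun n => by
      rw [hw1, add_sub_cancel_left]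
      exact (hg n _ (hin n) (hc n)).1)
  refine ⟨u, ?_, ?_⟩
  · have := hu 0
    have h0 : w 0 = 0 := rfl
    rwa [h0, sub_zero] at this
  · have key : ∀ n, z - D u ∈ FS κ C₁ C₂ (P n) (Q n) := by
      intro n
      have h := Submodule.sub_mem _ (hin n) (hDF n _ (hu n))
      rw [map_sub] at h
      convert h using 1
      abel
    rw [← sub_eq_zero]
    refine Prod.ext (funext fun m => ?_) (funext fun m => ?_)
    · obtain ⟨n, hn⟩ := hP' m
      exact (key n).1 m hn
    · obtain ⟨n, hn⟩ := hQ' m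
      exact (key n).2 m hn

end Filt

section Total

variable {κ : Type} [Field κ]

/-- `δ` landing in degree `m`. -/
def dA (M : Mixed κ) (m : ℤ) : M.C (m - 1) →ₗ[κ] M.C m :=
  (fcast (show m - 1 + 1 = m by ring)).comp (M.δ (m - 1))

/-- `β` landing in degree `m`. -/
def dB (M : Mixed κ) (m : ℤ) : M.C (m + 1) →ₗ[κ] M.C m :=
  (fcast (show m + 1 - 1 = m by ring)).comp (M.β (m + 1))

/-- Total differential on all families. -/
def Dt (M : Mixed κ) : (∀ m, M.C m) →ₗ[κ] (∀ m, M.C m) :=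
  LinearMap.pi fun m => (dB M m).comp (LinearMap.proj (m + 1)) + (dA M m).comp (LinearMap.proj (m - 1))

theorem Dt_apply (M : Mixed κ) (x : ∀ m, M.C m) (m : ℤ) :
    Dt M x m = dB M m (x (m + 1)) + dA M m (x (m - 1)) := rfl

theorem dA_eq (M : Mixed κ) (x : ∀ m, M.C m) (i m : ℤ) (h : i + 1 = m) :
    dA M m (x (m - 1)) = fcast (κ := κ) h (M.δ i (x i)) := by
  obtain rfl : i = m - 1 := by omega
  rfl

theorem dB_eq (M : Mixed κ) (x : ∀ m, M.C m) (i m : ℤ) (h : i - 1 = m) :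
    dB M m (x (m + 1)) = fcast (κ := κ) h (M.β i (x i)) := by
  obtain rfl : i = m + 1 := by omega
  rfl

theorem dA_dA (M : Mixed κ) (m : ℤ) (x : M.C (m - 1 - 1)) : dA M m (dA M (m - 1) x) = 0 := by
  have key : ∀ (j k l : ℤ) (h1 : k + 1 = j) (h2 : j + 1 = l) (x : M.C k),
      fcast (κ := κ) h2 (M.δ j (fcast (κ := κ) h1 (M.δ k x))) = 0 := by
    intro j k l h1 h2 x
    subst h1; subst h2
    exact M.δδ k x
  exact key _ _ _ _ _ _

theorem dB_dB (M : Mixed κ) (m : ℤ) (x : M.C (m + 1 + 1)) : dB M m (dB M (m + 1) x) = 0 := by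
  have key : ∀ (j k l : ℤ) (h1 : k - 1 = j) (h2 : j - 1 = l) (x : M.C k),
      fcast (κ := κ) h2 (M.β j (fcast (κ := κ) h1 (M.β k x))) = 0 := by
    intro j k l h1 h2 x
    subst h1; subst h2
    exact M.ββ k x
  exact key _ _ _ _ _ _

theorem dB_dA (M : Mixed κ) (x : ∀ m, M.C m) (m : ℤ) :
    dB M m (dA M (m + 1) (x (m + 1 - 1))) + dA M m (dB M (m - 1) (x (m - 1 + 1))) = 0 := by
  rw [dA_eq M x m (m + 1) rfl, dB_eq M x m (m - 1) rfl]
  exact M.βδ m (x m)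

theorem Dt_Dt (M : Mixed κ) (x : ∀ m, M.C m) : Dt M (Dt M x) = 0 := by
  funext m
  rw [Dt_apply, Dt_apply, Dt_apply, map_add, map_add, dA_dA, dB_dB, zero_add, add_zero]
  exact dB_dA M x m

variable {M₁ M₂ : Mixed κ} (f : ∀ n : ℤ, M₁.C n →ₗ[κ] M₂.C n)

/-- Total map. -/
def ft : (∀ m, M₁.C m) →ₗ[κ] (∀ m, M₂.C m) :=
  LinearMap.pi fun m => (f m).comp (LinearMap.proj m)

theorem ft_apply (x : ∀ m, M₁.C m) (m : ℤ) : ft f x m = f m (x m) := rfl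

/-- Total cone differential. -/
def Dc : ((∀ m, M₁.C m) × (∀ m, M₂.C m)) →ₗ[κ] ((∀ m, M₁.C m) × (∀ m, M₂.C m)) :=
  ((Dt M₁).comp (LinearMap.fst κ _ _)).prod
    ((ft f).comp (LinearMap.fst κ _ _) - (Dt M₂).comp (LinearMap.snd κ _ _))

theorem Dc_fst (z : (∀ m, M₁.C m) × (∀ m, M₂.C m)) : (Dc f z).1 = Dt M₁ z.1 := rfl
theorem Dc_snd (z : (∀ m, M₁.C m) × (∀ m, M₂.C m)) : (Dc f z).2 = ft f z.1 - Dt M₂ z.2 := rfl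

theorem f_fcast (i j : ℤ) (h : i = j) (z : M₁.C i) :
    fcast (κ := κ) h (f i z) = f j (fcast (κ := κ) h z) := by subst h; rfl

theorem f_dA
    (hδ : ∀ (n : ℤ) (x : M₁.C n), M₂.δ n (f n x) = f (n + 1) (M₁.δ n x))
    (m : ℤ) (x : M₁.C (m - 1)) : dA M₂ m (f _ x) = f m (dA M₁ m x) := by
  simp only [dA, LinearMap.comp_apply, hδ]
  exact f_fcast f _ _ _ _

theorem f_dB
    (hβ : ∀ (n : ℤ) (x : M₁.C n), M₂.β n (f n x) = f (n - 1) (M₁.β n x))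
    (m : ℤ) (x : M₁.C (m + 1)) : dB M₂ m (f _ x) = f m (dB M₁ m x) := by
  simp only [dB, LinearMap.comp_apply, hβ]
  exact f_fcast f _ _ _ _

theorem ft_Dt
    (hδ : ∀ (n : ℤ) (x : M₁.C n), M₂.δ n (f n x) = f (n + 1) (M₁.δ n x))
    (hβ : ∀ (n : ℤ) (x : M₁.C n), M₂.β n (f n x) = f (n - 1) (M₁.β n x))
    (x : ∀ m, M₁.C m) : Dt M₂ (ft f x) = ft f (Dt M₁ x) := by
  funext m
  rw [Dt_apply, ft_apply, ft_apply, ft_apply, Dt_apply, map_add, f_dA f hδ, f_dB f hβ]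

theorem Dc_Dc
    (hδ : ∀ (n : ℤ) (x : M₁.C n), M₂.δ n (f n x) = f (n + 1) (M₁.δ n x))
    (hβ : ∀ (n : ℤ) (x : M₁.C n), M₂.β n (f n x) = f (n - 1) (M₁.β n x))
    (z : (∀ m, M₁.C m) × (∀ m, M₂.C m)) : Dc f (Dc f z) = 0 := by
  refine Prod.ext ?_ ?_
  · rw [Dc_fst, Dc_fst, Dt_Dt]; rfl
  · rw [Dc_snd, Dc_fst, Dc_snd, map_sub, Dt_Dt, ft_Dt f hδ hβ]; simp

theorem acycA
    (hδ : ∀ (n : ℤ) (x : M₁.C n), M₂.δ n (f n x) = f (n + 1) (M₁.δ n x))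
    (hiso : ∀ n : ℤ, Function.Bijective (Hmap₂ M₁.δ M₂.δ n n (f n))) (m : ℤ)
    (a : M₁.C m) (b : M₂.C (m - 1)) (ha : M₁.δ m a = 0) (hab : f m a = dA M₂ m b) :
    ∃ (a' : M₁.C (m - 1)) (b' : M₂.C (m - 1 - 1)),
      a = dA M₁ m a' ∧ b = f _ a' - dA M₂ (m - 1) b' := by
  obtain ⟨a0, h0⟩ := ((Hmap_bij _ _ f hδ m).1 (hiso m)).1 a ha ⟨b, hab.symm⟩
  have h0' : dA M₁ m a0 = a := h0
  have h1 : M₂.δ (m - 1) (b - f _ a0) = 0 := by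
    apply fcast_inj (κ := κ) (show m - 1 + 1 = m by ring)
    have : dA M₂ m (b - f _ a0) = 0 := by
      rw [map_sub, ← hab, f_dA f hδ, h0', sub_self]
    exact this
  obtain ⟨c, hc, b'', hb⟩ := ((Hmap_bij _ _ f hδ (m - 1)).1 (hiso (m - 1))).2 _ h1
  have hc' : M₁.δ (m - 1) c = 0 := hc
  have hb' : dA M₂ (m - 1) b'' = b - f _ a0 - f _ c := hb
  refine ⟨a0 + c, - b'', ?_, ?_⟩
  · have : dA M₁ m c = 0 := by simp only [dA, LinearMap.comp_apply, hc', map_zero]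
    rw [map_add, this, h0', add_zero]
  · rw [map_neg, hb', map_add]; abel

theorem acycB
    (hβ : ∀ (n : ℤ) (x : M₁.C n), M₂.β n (f n x) = f (n - 1) (M₁.β n x))
    (hiso : ∀ n : ℤ, Function.Bijective (hMap₂ M₁.β M₂.β n n (f n))) (m : ℤ)
    (a : M₁.C m) (b : M₂.C (m + 1)) (ha : M₁.β m a = 0) (hab : f m a = dB M₂ m b) :
    ∃ (a' : M₁.C (m + 1)) (b' : M₂.C (m + 1 + 1)),
      a = dB M₁ m a' ∧ b = f _ a' - dB M₂ (m + 1) b' := by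
  obtain ⟨a0, h0⟩ := ((hMap_bij _ _ f hβ m).1 (hiso m)).1 a ha ⟨b, hab.symm⟩
  have h0' : dB M₁ m a0 = a := h0
  have h1 : M₂.β (m + 1) (b - f _ a0) = 0 := by
    apply fcast_inj (κ := κ) (show m + 1 - 1 = m by ring)
    have : dB M₂ m (b - f _ a0) = 0 := by
      rw [map_sub, ← hab, f_dB f hβ, h0', sub_self]
    exact this
  obtain ⟨c, hc, b'', hb⟩ := ((hMap_bij _ _ f hβ (m + 1)).1 (hiso (m + 1))).2 _ h1
  have hc' : M₁.β (m + 1) c = 0 := hc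
  have hb' : dB M₂ (m + 1) b'' = b - f _ a0 - f _ c := hb
  refine ⟨a0 + c, - b'', ?_, ?_⟩
  · have : dB M₁ m c = 0 := by simp only [dB, LinearMap.comp_apply, hc', map_zero]
    rw [map_add, this, h0', add_zero]
  · rw [map_neg, hb', map_add]; abel

theorem Dt_zero_of (M : Mixed κ) (x : ∀ m, M.C m) (m : ℤ) (h1 : x (m + 1) = 0)
    (h2 : x (m - 1) = 0) : Dt M x m = 0 := by
  rw [Dt_apply, h1, h2, map_zero, map_zero, add_zero]

theorem eval_cast (M : Mixed κ) (x : ∀ m, M.C m) {i j : ℤ} (h : i = j) (hx : x i = 0) :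
    x j = 0 := by subst h; exact hx

theorem solveB
    (hδ : ∀ (n : ℤ) (x : M₁.C n), M₂.δ n (f n x) = f (n + 1) (M₁.δ n x))
    (hβ : ∀ (n : ℤ) (x : M₁.C n), M₂.β n (f n x) = f (n - 1) (M₁.β n x))
    (hiso : ∀ n : ℤ, Function.Bijective (hMap₂ M₁.β M₂.β n n (f n))) (N : ℤ)
    (z : (∀ m, M₁.C m) × (∀ m, M₂.C m)) (h1 : ∀ m, m < N → z.1 m = 0)
    (h2 : ∀ m, m < N + 1 → z.2 m = 0) (hz : Dc f z = 0) : ∃ w, z = Dc f w := by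
  refine Exists.imp ?_ (FS_solve (κ := κ) (fun n m => m < N + n) (fun n m => m < N + 1 + n)
    (fun n m h => by push_cast; omega) (fun n m h => by push_cast; omega)
    (fun m => ⟨(m - N + 1).toNat, by omega⟩) (fun m => ⟨(m - N + 1).toNat, by omega⟩)
    (Dc f) (Dc_Dc f hδ hβ) ?_ ?_ z ⟨fun m h => h1 m (by simpa using h),
      fun m h => h2 m (by simpa using h)⟩ hz)
  · exact fun w hw => hw.2
  · rintro n z ⟨hz1, hz2⟩
    push_cast at hz1 hz2
    refine ⟨fun m hm => ?_, fun m hm => ?_⟩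
    · exact Dt_zero_of _ _ _ (hz1 _ (by omega)) (hz1 _ (by omega))
    · show f m (z.1 m) - Dt M₂ z.2 m = 0
      rw [hz1 m (by omega), map_zero,
        Dt_zero_of _ _ _ (hz2 _ (by omega)) (hz2 _ (by omega)), sub_zero]
  · rintro n z ⟨hz1, hz2⟩ hz
    obtain ⟨m, hm⟩ : ∃ m, m = N + (n : ℤ) := ⟨_, rfl⟩
    have ha : M₁.β m (z.1 m) = 0 := by
      have h := congrFun (congrArg Prod.fst hz) (m - 1)
      rw [Dc_fst, Dt_apply, hz1 (m - 1 - 1) (by omega), map_zero, add_zero,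
        dB_eq M₁ z.1 m (m - 1) rfl] at h
      exact h
    have hab : f m (z.1 m) = dB M₂ m (z.2 (m + 1)) := by
      have h := congrFun (congrArg Prod.snd hz) m
      rw [Dc_snd] at h
      have h' : f m (z.1 m) - Dt M₂ z.2 m = 0 := h
      rw [Dt_apply, hz2 (m - 1) (by omega), map_zero, add_zero] at h'
      exact sub_eq_zero.1 h'
    obtain ⟨a', b', e1, e2⟩ := acycB f hβ hiso m _ _ ha hab
    refine ⟨(Pi.single (m + 1) a', Pi.single (m + 1 + 1) b'), ⟨fun j hj => ?_, fun j hj => ?_⟩,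
      ⟨fun j hj => ?_, fun j hj => ?_⟩⟩
    · push_cast at hj
      exact Pi.single_eq_of_ne (by omega) _
    · push_cast at hj
      exact Pi.single_eq_of_ne (by omega) _
    · push_cast at hj
      show z.1 j - Dt M₁ (Pi.single (m + 1) a') j = 0
      by_cases hjm : j = m
      · subst hjm
        rw [Dt_apply, Pi.single_eq_same, Pi.single_eq_of_ne (by omega), map_zero, add_zero, ← e1,
          sub_self]
      · rw [hz1 j (by omega), Dt_zero_of, sub_zero]
        · exact Pi.single_eq_of_ne (by omega) _
        · exact Pi.single_eq_of_ne (by omega) _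
    · push_cast at hj
      show z.2 j - (f j ((Pi.single (m + 1) a' : ∀ m, M₁.C m) j)
        - Dt M₂ (Pi.single (m + 1 + 1) b') j) = 0
      by_cases hjm : j = m + 1
      · subst hjm
        rw [Dt_apply, Pi.single_eq_same, Pi.single_eq_same, Pi.single_eq_of_ne (by omega),
          map_zero, add_zero, ← e2, sub_self]
      · rw [hz2 j (by omega), Dt_zero_of, Pi.single_eq_of_ne (by omega), map_zero, sub_zero,
          sub_zero]
        · exact Pi.single_eq_of_ne (by omega) _
        · exact Pi.single_eq_of_ne (by omega) _

theorem solveA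
    (hδ : ∀ (n : ℤ) (x : M₁.C n), M₂.δ n (f n x) = f (n + 1) (M₁.δ n x))
    (hβ : ∀ (n : ℤ) (x : M₁.C n), M₂.β n (f n x) = f (n - 1) (M₁.β n x))
    (hiso : ∀ n : ℤ, Function.Bijective (Hmap₂ M₁.δ M₂.δ n n (f n))) (N : ℤ)
    (z : (∀ m, M₁.C m) × (∀ m, M₂.C m)) (h1 : ∀ m, N < m → z.1 m = 0)
    (h2 : ∀ m, N - 1 < m → z.2 m = 0) (hz : Dc f z = 0) :
    ∃ w, ((∀ m, N - 1 < m → w.1 m = 0) ∧ (∀ m, N - 2 < m → w.2 m = 0)) ∧ z = Dc f w := by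
  refine Exists.imp ?_ (FS_solve (κ := κ) (fun n m => N - n < m) (fun n m => N - 1 - n < m)
    (fun n m h => by push_cast; omega) (fun n m h => by push_cast; omega)
    (fun m => ⟨(N - m + 1).toNat, by omega⟩) (fun m => ⟨(N - m + 1).toNat, by omega⟩)
    (Dc f) (Dc_Dc f hδ hβ) ?_ ?_ z ⟨fun m h => h1 m (by simpa using h),
      fun m h => h2 m (by simpa using h)⟩ hz)
  · rintro w ⟨hw0, hw⟩
    exact ⟨⟨fun m hm => hw0.1 m (by push_cast; omega),
      fun m hm => hw0.2 m (by push_cast; omega)⟩, hw⟩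
  · rintro n z ⟨hz1, hz2⟩
    push_cast at hz1 hz2
    refine ⟨fun m hm => ?_, fun m hm => ?_⟩
    · exact Dt_zero_of _ _ _ (hz1 _ (by omega)) (hz1 _ (by omega))
    · show f m (z.1 m) - Dt M₂ z.2 m = 0
      rw [hz1 m (by omega), map_zero,
        Dt_zero_of _ _ _ (hz2 _ (by omega)) (hz2 _ (by omega)), sub_zero]
  · rintro n z ⟨hz1, hz2⟩ hz
    obtain ⟨m, hm⟩ : ∃ m, m = N - (n : ℤ) := ⟨_, rfl⟩
    have ha : M₁.δ m (z.1 m) = 0 := by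
      have h := congrFun (congrArg Prod.fst hz) (m + 1)
      rw [Dc_fst, Dt_apply, hz1 (m + 1 + 1) (by omega), map_zero, zero_add,
        dA_eq M₁ z.1 m (m + 1) rfl] at h
      exact h
    have hab : f m (z.1 m) = dA M₂ m (z.2 (m - 1)) := by
      have h := congrFun (congrArg Prod.snd hz) m
      rw [Dc_snd] at h
      have h' : f m (z.1 m) - Dt M₂ z.2 m = 0 := h
      rw [Dt_apply, hz2 (m + 1) (by omega), map_zero, zero_add] at h'
      exact sub_eq_zero.1 h'
    obtain ⟨a', b', e1, e2⟩ := acycA f hδ hiso m _ _ ha hab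
    refine ⟨(Pi.single (m - 1) a', Pi.single (m - 1 - 1) b'), ⟨fun j hj => ?_, fun j hj => ?_⟩,
      ⟨fun j hj => ?_, fun j hj => ?_⟩⟩
    · push_cast at hj
      exact Pi.single_eq_of_ne (by omega) _
    · push_cast at hj
      exact Pi.single_eq_of_ne (by omega) _
    · push_cast at hj
      show z.1 j - Dt M₁ (Pi.single (m - 1) a') j = 0
      by_cases hjm : j = m
      · subst hjm
        rw [Dt_apply, Pi.single_eq_same, Pi.single_eq_of_ne (by omega), map_zero, zero_add, ← e1,
          sub_self]
      · rw [hz1 j (by omega), Dt_zero_of, sub_zero]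
        · exact Pi.single_eq_of_ne (by omega) _
        · exact Pi.single_eq_of_ne (by omega) _
    · push_cast at hj
      show z.2 j - (f j ((Pi.single (m - 1) a' : ∀ m, M₁.C m) j)
        - Dt M₂ (Pi.single (m - 1 - 1) b') j) = 0
      by_cases hjm : j = m - 1
      · subst hjm
        rw [Dt_apply, Pi.single_eq_same, Pi.single_eq_same, Pi.single_eq_of_ne (by omega),
          map_zero, zero_add, ← e2, sub_self]
      · rw [hz2 j (by omega), Dt_zero_of, Pi.single_eq_of_ne (by omega), map_zero, sub_zero,
          sub_zero]
        · exact Pi.single_eq_of_ne (by omega) _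
        · exact Pi.single_eq_of_ne (by omega) _

theorem keyLemma
    (hδ : ∀ (n : ℤ) (x : M₁.C n), M₂.δ n (f n x) = f (n + 1) (M₁.δ n x))
    (hβ : ∀ (n : ℤ) (x : M₁.C n), M₂.β n (f n x) = f (n - 1) (M₁.β n x))
    (hisoδ : ∀ n : ℤ, Function.Bijective (Hmap₂ M₁.δ M₂.δ n n (f n)))
    (hisoβ : ∀ n : ℤ, Function.Bijective (hMap₂ M₁.β M₂.β n n (f n))) (s : ℤ)
    (x : ∀ m, M₁.C m) (y : ∀ m, M₂.C m)
    (h1 : ∀ m, s < m → Dt M₁ x m = 0)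
    (h2 : ∀ m, s - 1 < m → f m (x m) = Dt M₂ y m) :
    ∃ (w : ∀ m, M₁.C m) (v : ∀ m, M₂.C m), (∀ m, s + 1 ≤ m → x m = Dt M₁ w m) ∧
      (∀ m, s ≤ m → y m = f m (w m) - Dt M₂ v m) := by
  obtain ⟨z, ⟨hz1, hz2⟩, hz⟩ := solveA f hδ hβ hisoδ s (Dc f (x, y)) h1
    (fun m hm => sub_eq_zero.2 (h2 m hm)) (Dc_Dc f hδ hβ _)
  obtain ⟨w, hw⟩ := solveB f hδ hβ hisoβ (-1) ((x, y) - z)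
    (fun m hm => by have := M₁.trivNeg m (by omega); exact Subsingleton.elim _ _)
    (fun m hm => by have := M₂.trivNeg m (by omega); exact Subsingleton.elim _ _)
    (by rw [map_sub, hz, sub_self])
  refine ⟨w.1, w.2, fun m hm => ?_, fun m hm => ?_⟩
  · have h : x m - z.1 m = Dt M₁ w.1 m := congrFun (congrArg Prod.fst hw) m
    rw [← h, hz1 m (by omega), sub_zero]
  · have h : y m - z.2 m = f m (w.1 m) - Dt M₂ w.2 m := congrFun (congrArg Prod.snd hw) m
    rw [← h, hz2 m (by omega), sub_zero]

/-- Restriction to `^-C^r`. -/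
def Rr (M : Mixed κ) (x : ∀ m, M.C m) (r : ℤ) : minusC M r := fun k => x (r + 2 * (k : ℤ))

open Classical in
/-- Extension by zero. -/
noncomputable def Er (M : Mixed κ) (r : ℤ) (w : minusC M r) : ∀ m, M.C m := fun m =>
  if h : ∃ k : ℕ, r + 2 * (k : ℤ) = m then fcast (κ := κ) h.choose_spec (w h.choose) else 0

theorem Er_zero (M : Mixed κ) (r : ℤ) (w : minusC M r) (m : ℤ)
    (h : ¬ ∃ k : ℕ, r + 2 * (k : ℤ) = m) : Er M r w m = 0 := dif_neg h

theorem Rr_Er (M : Mixed κ) (r : ℤ) (w : minusC M r) : Rr M (Er M r w) r = w := by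
  funext k
  have h : ∃ k' : ℕ, r + 2 * (k' : ℤ) = r + 2 * (k : ℤ) := ⟨k, rfl⟩
  show Er M r w (r + 2 * (k : ℤ)) = w k
  unfold Er
  rw [dif_pos h]
  have hk : h.choose = k := by have := h.choose_spec; omega
  have key : ∀ (j : ℕ) (hj : r + 2 * (j : ℤ) = r + 2 * (k : ℤ)), j = k →
      fcast (κ := κ) (C := M.C) hj (w j) = w k := by
    intro j hj e; subst e; rfl
  exact key _ _ hk

theorem minusD_Rr (M : Mixed κ) (x : ∀ m, M.C m) (r : ℤ) :
    minusD M r (Rr M x r) = Rr M (Dt M x) (r + 1) := by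
  funext k
  show _ = Dt M x (r + 1 + 2 * (k : ℤ))
  rw [Dt_apply, dB_eq M x (r + 2 * ((k + 1 : ℕ) : ℤ)) _ (by push_cast; ring),
    dA_eq M x (r + 2 * (k : ℤ)) _ (by ring)]
  rfl

theorem minusD_pred (M : Mixed κ) (x : ∀ m, M.C m) (r : ℤ) :
    fcast (κ := κ) (C := minusC M) (show r - 1 + 1 = r by ring) (minusD M (r - 1) (Rr M x (r - 1)))
      = Rr M (Dt M x) r := by
  rw [minusD_Rr]
  exact fcast_fun (C := minusC M) (Rr M (Dt M x)) _

theorem Rr_ext (M : Mixed κ) (x y : ∀ m, M.C m) (r : ℤ) (h : Rr M x r = Rr M y r) (m : ℤ)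
    (hm : r ≤ m) (hp : (m - r) % 2 = 0) : x m = y m := by
  obtain ⟨k, rfl⟩ : ∃ k : ℕ, m = r + 2 * (k : ℤ) := ⟨((m - r) / 2).toNat, by omega⟩
  exact congrFun h k

theorem minus_bijective
    (hδ : ∀ (n : ℤ) (x : M₁.C n), M₂.δ n (f n x) = f (n + 1) (M₁.δ n x))
    (hβ : ∀ (n : ℤ) (x : M₁.C n), M₂.β n (f n x) = f (n - 1) (M₁.β n x))
    (hisoδ : ∀ n : ℤ, Function.Bijective (Hmap₂ M₁.δ M₂.δ n n (f n)))
    (hisoβ : ∀ n : ℤ, Function.Bijective (hMap₂ M₁.β M₂.β n n (f n))) (r : ℤ) :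
    Function.Bijective (Hmap₂ (minusD M₁) (minusD M₂) r r (minusMap f r)) := by
  have hfR : ∀ (x : ∀ m, M₁.C m) r, minusMap f r (Rr M₁ x r) = Rr M₂ (ft f x) r :=
    fun x r => rfl
  refine (Hmap_bij (C₁ := minusC M₁) (C₂ := minusC M₂) (minusD M₁) (minusD M₂) (minusMap f)
    ?_ r).2 ⟨?_, ?_⟩
  · intro n x
    rw [← Rr_Er M₁ n x, hfR, minusD_Rr, minusD_Rr, hfR, ft_Dt f hδ hβ]
  · rintro ω hω ⟨ζ, hζ⟩
    have hω' : minusD M₁ r ω = 0 := hω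
    have hζ' : fcast (κ := κ) (C := minusC M₂) (show r - 1 + 1 = r by ring)
      (minusD M₂ (r - 1) ζ) = minusMap f r ω := hζ
    obtain ⟨w, v, e1, -⟩ := keyLemma f hδ hβ hisoδ hisoβ (r - 1) (Er M₁ r ω) (Er M₂ (r - 1) ζ)
      (fun m hm => by
        by_cases hp : (m - r) % 2 = 0
        · exact Dt_zero_of _ _ _ (Er_zero _ _ _ _ (by rintro ⟨k, hk⟩; omega))
            (Er_zero _ _ _ _ (by rintro ⟨k, hk⟩; omega))
        · refine Rr_ext M₁ _ 0 (r + 1) ?_ m (by omega) (by omega)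
          rw [← minusD_Rr, Rr_Er, hω']; rfl)
      (fun m hm => by
        by_cases hp : (m - r) % 2 = 0
        · refine Rr_ext M₂ (ft f (Er M₁ r ω)) _ r ?_ m (by omega) (by omega)
          rw [← minusD_pred, ← hfR, Rr_Er, Rr_Er, hζ']
        · rw [Dt_zero_of _ _ _ (Er_zero _ _ _ _ (by rintro ⟨k, hk⟩; omega))
            (Er_zero _ _ _ _ (by rintro ⟨k, hk⟩; omega)),
            Er_zero _ _ _ _ (by rintro ⟨k, hk⟩; omega), map_zero])
    refine ⟨Rr M₁ w (r - 1), ?_⟩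
    refine (minusD_pred M₁ w r).trans ?_
    rw [← Rr_Er M₁ r ω]
    funext k
    exact (e1 _ (by omega)).symm
  · intro η hη
    have hη' : minusD M₂ r η = 0 := hη
    obtain ⟨w, v, e1, e2⟩ := keyLemma f hδ hβ hisoδ hisoβ r 0 (Er M₂ r η)
      (fun m hm => by rw [map_zero]; rfl)
      (fun m hm => by
        have h0 : f m ((0 : ∀ m, M₁.C m) m) = 0 := map_zero _
        rw [h0]
        by_cases hp : (m - r) % 2 = 0
        · exact (Dt_zero_of _ _ _ (Er_zero _ _ _ _ (by rintro ⟨k, hk⟩; omega))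
            (Er_zero _ _ _ _ (by rintro ⟨k, hk⟩; omega))).symm
        · refine Rr_ext M₂ 0 _ (r + 1) ?_ m (by omega) (by omega)
          rw [← minusD_Rr, Rr_Er, hη']; rfl)
    refine ⟨Rr M₁ w r, ?_, - Rr M₂ v (r - 1), ?_⟩
    · show minusD M₁ r (Rr M₁ w r) = 0
      rw [minusD_Rr]
      funext k
      exact (e1 _ (by omega)).symm
    · rw [map_neg]
      refine (congrArg Neg.neg (minusD_pred M₂ v r)).trans ?_
      rw [hfR]
      funext k
      have h := e2 (r + 2 * (k : ℤ)) (by omega)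
      have h' : η k = Er M₂ r η (r + 2 * (k : ℤ)) := (congrFun (Rr_Er M₂ r η) k).symm
      show - Dt M₂ v (r + 2 * (k : ℤ)) = η k - f _ (w (r + 2 * (k : ℤ)))
      rw [h', h]; abel

end Total

/-- if a morphism of mixed complexes induces isomorphisms on both the
cohomology `H^n(C, δ)` and the homology `H_n(C, β)` for every `n`, then it induces an
isomorphism on the negative theory `^-H^r_β` for every `r`. -/
theorem statement4 (κ : Type) [Field κ] (M₁ M₂ : Mixed κ)
    (f : ∀ n : ℤ, M₁.C n →ₗ[κ] M₂.C n)
    (hδ : ∀ (n : ℤ) (x : M₁.C n), M₂.δ n (f n x) = f (n + 1) (M₁.δ n x))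
    (hβ : ∀ (n : ℤ) (x : M₁.C n), M₂.β n (f n x) = f (n - 1) (M₁.β n x))
    (hisoδ : ∀ n : ℤ, Function.Bijective (Hmap₂ M₁.δ M₂.δ n n (f n)))
    (hisoβ : ∀ n : ℤ, Function.Bijective (hMap₂ M₁.β M₂.β n n (f n))) :
    ∀ r : ℤ, Function.Bijective (Hmap₂ (minusD M₁) (minusD M₂) r r (minusMap f r)) :=
  fun r => minus_bijective f hδ hβ hisoδ hisoβ r

end CDGA
end

section
/- Let (C, δ, β) be a mixed complex over κ that is β-acyclic, i.e. β₁ : C¹ → C⁰ is surjective and ker(β_n) = im(β_{n+1}) for every n ≥ 1. The image Im(β) ⊆ C is preserved by δ (since δ(βη) = −β(δη)), so (Im(β), δ) is a cochain complex. Then the map j : Im(β)^r → ^+C^r defined by j(ω) = (ω, 0, 0, …) is a morphism of cochain complexes from (Im(β), δ) to (^+C, ^+D_β), and it induces an isomorphism H^r(Im(β), δ) ≅ ^+H^r_β for every r. -/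
open LinearMap DirectSum

namespace CDGA

variable {κ : Type} [Field κ]

/-- The image of `β` in degree `n`, `Im(β)^n = β(C^{n+1}) ⊆ C^n`. -/
def ImB (M : Mixed κ) (n : ℤ) : Submodule κ (M.C n) :=
  LinearMap.range ((fcast (show n + 1 - 1 = n by ring)).comp (M.β (n + 1)))

open Classical in
/-- The differential of the cochain complex `(Im(β), δ)` (restriction of `δ`; junk value
`0` if `δ` did not preserve `Im(β)` — it always does, since `δ(βη) = -β(δη)`). -/
noncomputable def dImB (M : Mixed κ) (n : ℤ) : ↥(ImB M n) →ₗ[κ] ↥(ImB M (n + 1)) :=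
  if h : ∀ x : ↥(ImB M n), M.δ n x.1 ∈ ImB M (n + 1) then
    LinearMap.codRestrict (ImB M (n + 1)) ((M.δ n).comp (ImB M n).subtype) h
  else 0

/-- The map `j : Im(β)^r → ^+C^r`, `ω ↦ (ω, 0, 0, …)`. -/
def jImB (M : Mixed κ) (r : ℤ) : ↥(ImB M r) →ₗ[κ] plusC M r :=
  LinearMap.pi fun k : ℕ =>
    match k with
    | 0 => (fcast (show r = r - 2 * ((0 : ℕ) : ℤ) by push_cast; ring)).comp (ImB M r).subtype
    | (_ + 1) => 0

section Helpers

variable {M : Mixed κ}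

/-- `δ` with a free target index. -/
def dd (M : Mixed κ) {m n : ℤ} (h : m + 1 = n) : M.C m →ₗ[κ] M.C n := (fcast h).comp (M.δ m)

/-- `β` with a free target index. -/
def bb (M : Mixed κ) {m n : ℤ} (h : m - 1 = n) : M.C m →ₗ[κ] M.C n := (fcast h).comp (M.β m)

theorem dd_dd {m n p : ℤ} (h : m + 1 = n) (h' : n + 1 = p) (x : M.C m) :
    dd M h' (dd M h x) = 0 := by
  subst h; subst h'; exact M.δδ m x

theorem bb_bb {m n p : ℤ} (h : m - 1 = n) (h' : n - 1 = p) (x : M.C m) :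
    bb M h' (bb M h x) = 0 := by
  subst h; subst h'; exact M.ββ m x

theorem bb_dd {m n p q : ℤ} (h : m + 1 = n) (h' : n - 1 = q) (h2 : m - 1 = p) (h2' : p + 1 = q)
    (x : M.C m) : bb M h' (dd M h x) = - dd M h2' (bb M h2 x) := by
  obtain rfl : m = q := by omega
  subst h; subst h2
  exact eq_neg_of_add_eq_zero_left (M.βδ m x)

theorem dd_fcast {m m' n : ℤ} (e : m = m') (h : m' + 1 = n) (x : M.C m) :
    dd M h (fcast (κ := κ) e x) = dd M (by omega : m + 1 = n) x := by
  subst e; rfl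

theorem bb_fcast {m m' n : ℤ} (e : m = m') (h : m' - 1 = n) (x : M.C m) :
    bb M h (fcast (κ := κ) e x) = bb M (by omega : m - 1 = n) x := by
  subst e; rfl

theorem fcast_dd {m n n' : ℤ} (e : n = n') (h : m + 1 = n) (x : M.C m) :
    fcast (κ := κ) e (dd M h x) = dd M (by omega : m + 1 = n') x := by
  subst e; rfl

theorem fcast_fcast' {m n p : ℤ} (e : m = n) (e' : n = p) (x : M.C m) :
    fcast (κ := κ) e' (fcast (κ := κ) e x) = fcast (κ := κ) (e.trans e') x := by
  subst e; subst e'; rfl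

theorem fcast_self {m : ℤ} (e : m = m) (x : M.C m) : fcast (κ := κ) e x = x := rfl

theorem mem_ImB {m n : ℤ} (h : m - 1 = n) (x : M.C n) :
    x ∈ ImB M n ↔ ∃ y, bb M h y = x := by
  obtain rfl : m = n + 1 := by omega
  exact Iff.rfl

theorem acyc_all (hsurj : Function.Surjective (M.β 1))
    (hacyc : ∀ n : ℤ, 1 ≤ n → LinearMap.ker (M.β n) = ImB M n) {n p : ℤ} (h' : n - 1 = p)
    (x : M.C n) : x ∈ ImB M n ↔ bb M h' x = 0 := by
  subst h'
  rcases lt_trichotomy n 0 with h | h | h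
  · have := M.trivNeg n h
    rw [Subsingleton.elim x 0]
    simp
  · subst h
    have := M.trivNeg (0 - 1) (by norm_num)
    refine iff_of_true ?_ (Subsingleton.elim _ _)
    rw [mem_ImB (show (1 : ℤ) - 1 = 0 by norm_num)]
    obtain ⟨y, hy⟩ := hsurj (fcast (κ := κ) (show (0 : ℤ) = 1 - 1 by norm_num) x)
    refine ⟨y, ?_⟩
    change fcast (κ := κ) (show (1 : ℤ) - 1 = 0 by norm_num) (M.β 1 y) = x
    rw [hy, fcast_fcast']
    rfl
  · rw [← hacyc n (by omega)]
    exact Iff.rfl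

theorem key_zero {dg de : ℕ → ℤ} (h1 : ∀ k, de k + 1 = dg k) (h2 : ∀ k, de k - 1 = dg (k + 1))
    (h3 : ∀ k, dg k - 1 = de k) (h4 : ∀ k, dg (k + 1) + 1 = de k)
    (ω : ∀ k, M.C (dg k)) (hω : bb M (h3 0) (ω 0) + dd M (h4 0) (ω 1) = 0)
    (η : ∀ k, M.C (de k))
    (hη : bb M (h2 0) (η 0) + dd M (h1 1) (η 1) = ω 1) :
    bb M (h3 0) (ω 0 - dd M (h1 0) (η 0)) = 0 := by
  rw [map_sub, bb_dd (h1 0) (h3 0) (h2 0) (h4 0), eq_neg_of_add_eq_zero_left hω, ← hη, map_add,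
    dd_dd]
  simp

theorem key (hsurj : Function.Surjective (M.β 1))
    (hacyc : ∀ n : ℤ, 1 ≤ n → LinearMap.ker (M.β n) = ImB M n) (j : ℕ) :
    ∀ {dg de : ℕ → ℤ} (h1 : ∀ k, de k + 1 = dg k) (h2 : ∀ k, de k - 1 = dg (k + 1))
    (h3 : ∀ k, dg k - 1 = de k) (h4 : ∀ k, dg (k + 1) + 1 = de k) (_ : dg 0 < 2 * (j : ℤ))
    (ω : ∀ k, M.C (dg k)) (_ : ∀ k, bb M (h3 k) (ω k) + dd M (h4 k) (ω (k + 1)) = 0),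
    ∃ η : ∀ k, M.C (de k), ∀ k, bb M (h2 k) (η k) + dd M (h1 (k + 1)) (η (k + 1)) = ω (k + 1) := by
  induction j with
  | zero =>
    intro dg de h1 h2 h3 h4 h0 ω hω
    have hneg : ∀ k, dg k < 0 := by
      intro k
      induction k with
      | zero => simpa using h0
      | succ k ih => have := h1 k; have := h2 k; omega
    refine ⟨fun _ => 0, fun k => ?_⟩
    have := M.trivNeg _ (hneg (k + 1))
    exact Subsingleton.elim _ _
  | succ j ih =>
    intro dg de h1 h2 h3 h4 h0 ω hω
    obtain ⟨η, hη⟩ := ih (dg := fun k => dg (k + 1)) (de := fun k => de (k + 1))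
      (fun k => h1 (k + 1)) (fun k => h2 (k + 1)) (fun k => h3 (k + 1)) (fun k => h4 (k + 1))
      (by have := h1 0; have := h2 0; push_cast at h0; simp only [zero_add] at *; omega)
      (fun k => ω (k + 1)) (fun k => hω (k + 1))
    have hz := key_zero (dg := fun k => dg (k + 1)) (de := fun k => de (k + 1))
      (fun k => h1 (k + 1)) (fun k => h2 (k + 1)) (fun k => h3 (k + 1)) (fun k => h4 (k + 1))
      (fun k => ω (k + 1)) (hω 1) η (hη 0)
    have hz' := (acyc_all hsurj hacyc _ _).2 hz
    obtain ⟨y, hy⟩ := (mem_ImB (h2 0) _).1 hz'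
    refine ⟨fun k => match k with
      | 0 => y
      | k + 1 => η k, fun k => ?_⟩
    cases k with
    | zero => exact (congrArg (· + dd M (h1 1) (η 0)) hy).trans (sub_add_cancel _ _)
    | succ k => exact hη k

theorem δ_mem (n : ℤ) (x : M.C n) (hx : x ∈ ImB M n) : M.δ n x ∈ ImB M (n + 1) := by
  obtain ⟨y, rfl⟩ := (mem_ImB (show n + 1 - 1 = n by ring) x).1 hx
  refine (mem_ImB (show n + 1 + 1 - 1 = n + 1 by ring) _).2 ⟨- dd M rfl y, ?_⟩
  rw [map_neg, bb_dd rfl _ (show n + 1 - 1 = n by ring) rfl, neg_neg]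
  rfl

theorem dImB_coe {n p : ℤ} (h : n + 1 = p) (x : ↥(ImB M n)) :
    (fcast (κ := κ) (C := fun n => ↥(ImB M n)) h (dImB M n x)).1 = dd M h x.1 := by
  subst h
  change (dImB M n x).1 = M.δ n x.1
  have h : ∀ x : ↥(ImB M n), M.δ n x.1 ∈ ImB M (n + 1) := fun x => δ_mem n x.1 x.2
  have e : dImB M n = LinearMap.codRestrict (ImB M (n + 1)) ((M.δ n).comp (ImB M n).subtype) h :=
    dif_pos h
  rw [e]
  rfl

theorem plusD_zero {a r : ℤ} (h : a + 1 = r) (η : plusC M a) :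
    fcast (κ := κ) (C := plusC M) h (plusD M a η) 0
      = dd M (by subst h; push_cast; ring : a - 2 * ((0 : ℕ) : ℤ) + 1 = r - 2 * ((0 : ℕ) : ℤ))
        (η 0) := by
  subst h; rfl

theorem plusD_succ {a r : ℤ} (h : a + 1 = r) (η : plusC M a) (k : ℕ) :
    fcast (κ := κ) (C := plusC M) h (plusD M a η) (k + 1)
      = dd M (by subst h; push_cast; ring :
          a - 2 * ((k + 1 : ℕ) : ℤ) + 1 = r - 2 * ((k + 1 : ℕ) : ℤ)) (η (k + 1))
        + bb M (by subst h; push_cast; ring :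
          a - 2 * ((k : ℕ) : ℤ) - 1 = r - 2 * ((k + 1 : ℕ) : ℤ)) (η k) := by
  subst h; rfl

theorem j_zero (r : ℤ) (x : ↥(ImB M r)) :
    jImB M r x 0 = fcast (κ := κ) (show r = r - 2 * ((0 : ℕ) : ℤ) by push_cast; ring) x.1 := rfl

theorem j_succ (r : ℤ) (x : ↥(ImB M r)) (k : ℕ) : jImB M r x (k + 1) = 0 := rfl

theorem j_comm {n r : ℤ} (h : n + 1 = r) (x : ↥(ImB M n)) :
    fcast (κ := κ) (C := plusC M) h (plusD M n (jImB M n x))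
      = jImB M r (fcast (κ := κ) (C := fun n => ↥(ImB M n)) h (dImB M n x)) := by
  funext k
  rcases k with _ | _ | k
  · rw [plusD_zero, j_zero, j_zero, dImB_coe, fcast_dd, dd_fcast]
  · rw [plusD_succ, j_succ, j_succ, j_zero, map_zero, zero_add (_ : M.C _), bb_fcast]
    obtain ⟨y, hy⟩ := (mem_ImB (show n + 1 - 1 = n by ring) x.1).1 x.2
    rw [← hy, bb_bb]
  · rw [plusD_succ, j_succ, j_succ, j_succ, map_zero, map_zero, zero_add (_ : M.C _)]

/-- The lemma `key` for families indexed as in `plusC`. -/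
theorem key_plus (hsurj : Function.Surjective (M.β 1))
    (hacyc : ∀ n : ℤ, 1 ≤ n → LinearMap.ker (M.β n) = ImB M n) {a r : ℤ} (h : a + 1 = r)
    (ω : plusC M r)
    (hω : ∀ k : ℕ, plusD M r ω (k + 1) = 0) :
    ∃ (η : plusC M a) (x : ↥(ImB M r)),
      ω = jImB M r x + fcast (κ := κ) (C := plusC M) h (plusD M a η) := by
  have h1 : ∀ k : ℕ, a - 2 * (k : ℤ) + 1 = r - 2 * (k : ℤ) := fun k => by omega
  have h2 : ∀ k : ℕ, a - 2 * (k : ℤ) - 1 = r - 2 * ((k + 1 : ℕ) : ℤ) := fun k => by omega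
  have h3 : ∀ k : ℕ, r - 2 * (k : ℤ) - 1 = a - 2 * (k : ℤ) := fun k => by omega
  have h4 : ∀ k : ℕ, r - 2 * ((k + 1 : ℕ) : ℤ) + 1 = a - 2 * (k : ℤ) := fun k => by omega
  have hω' : ∀ k, bb M (h3 k) (ω k) + dd M (h4 k) (ω (k + 1)) = 0 := by
    intro k
    have e : r + 1 - 2 * ((k + 1 : ℕ) : ℤ) = a - 2 * (k : ℤ) := by omega
    have := hω k
    have h5 := plusD_succ (rfl : r + 1 = r + 1) ω k
    change plusD M r ω (k + 1) = _ at h5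
    rw [h5] at this
    generalize_proofs p1 p2 at this
    have aux : ∀ {q : ℤ} (e : r + 1 - 2 * ((k + 1 : ℕ) : ℤ) = q) (p3 : _ = q) (p4 : _ = q),
        bb M p3 (ω k) + dd M p4 (ω (k + 1)) = 0 := by
      intro q e p3 p4
      subst e
      exact (add_comm _ _).trans this
    exact aux e _ _
  obtain ⟨η, hη⟩ := key hsurj hacyc (r.toNat + 1) (dg := fun k : ℕ => r - 2 * (k : ℤ))
    (de := fun k : ℕ => a - 2 * (k : ℤ)) h1 h2 h3 h4 (by simp; omega) ω hω'
  have hz := key_zero (dg := fun k : ℕ => r - 2 * (k : ℤ))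
    (de := fun k : ℕ => a - 2 * (k : ℤ)) h1 h2 h3 h4 ω (hω' 0) η (hη 0)
  have e0 : r - 2 * ((0 : ℕ) : ℤ) = r := by simp
  refine ⟨η, ⟨fcast (κ := κ) e0 (ω 0 - dd M (h1 0) (η 0)), ?_⟩, ?_⟩
  · rw [acyc_all hsurj hacyc (show r - 1 = a - 2 * ((0 : ℕ) : ℤ) by simp; omega), bb_fcast]
    exact hz
  · funext k
    rcases k with _ | k
    · rw [Pi.add_apply, plusD_zero, j_zero, fcast_fcast', fcast_self, sub_add_cancel]
    · rw [Pi.add_apply, plusD_succ, j_succ, zero_add (_ : M.C _)]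
      exact (hη k).symm.trans (add_comm _ _)

theorem j_inj (r : ℤ) : Function.Injective (jImB M r) := by
  intro x y hxy
  have := congrArg (fun z => fcast (κ := κ) (show r - 2 * ((0 : ℕ) : ℤ) = r by simp) z)
    (congrFun hxy 0)
  simp only [j_zero, fcast_fcast', fcast_self] at this
  exact Subtype.ext this

theorem plusD_plusD_j (r : ℤ) (x : ↥(ImB M r)) :
    plusD M r (jImB M r x) = jImB M (r + 1) (dImB M r x) := j_comm rfl x

theorem plusD_sq {a r : ℤ} (h : a + 1 = r) (η : plusC M a) :
    plusD M r (fcast (κ := κ) (C := plusC M) h (plusD M a η)) = 0 := by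
  subst h
  change plusD M (a + 1) (plusD M a η) = 0
  have e0 := plusD_zero (rfl : a + 1 = a + 1) η
  have es := plusD_succ (rfl : a + 1 = a + 1) η
  change plusD M a η 0 = _ at e0
  change ∀ k, plusD M a η (k + 1) = _ at es
  funext k
  have f0 := plusD_zero (rfl : a + 1 + 1 = a + 1 + 1) (plusD M a η)
  have fs := plusD_succ (rfl : a + 1 + 1 = a + 1 + 1) (plusD M a η)
  change plusD M (a + 1) (plusD M a η) 0 = _ at f0
  change ∀ k, plusD M (a + 1) (plusD M a η) (k + 1) = _ at fs
  rcases k with _ | _ | k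
  · rw [f0, e0, dd_dd]; rfl
  · rw [fs, e0, es, map_add, dd_dd, zero_add (_ : M.C _)]
    erw [bb_dd _ _ (by push_cast; ring : a - 2 * ((0 : ℕ) : ℤ) - 1 = a + 1 - 2 * ((0 + 1 : ℕ) : ℤ))
      (by push_cast; ring)]
    exact add_neg_cancel _
  · rw [fs, es, es, map_add, map_add, dd_dd, bb_bb, zero_add (_ : M.C _), add_zero (_ : M.C _)]
    rw [bb_dd _ _ (by push_cast; ring :
      a - 2 * ((k + 1 : ℕ) : ℤ) - 1 = a + 1 - 2 * ((k + 1 + 1 : ℕ) : ℤ)) (by push_cast; ring)]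
    exact add_neg_cancel _

end Helpers

/-- if the mixed complex `(C, δ, β)` is `β`-acyclic (i.e. `β₁ : C¹ → C⁰` is
surjective and `ker β_n = im β_{n+1}` for `n ≥ 1`), then `δ` preserves `Im(β)`, the map
`j : (Im(β), δ) → (^+C, ^+D_β)`, `j(ω) = (ω, 0, 0, …)`, is a morphism of cochain
complexes, and `j` induces an isomorphism `H^r(Im(β), δ) ≅ ^+H^r_β` for every `r`. -/
theorem statement5 (κ : Type) [Field κ] (M : Mixed κ)
    (hsurj : Function.Surjective (M.β 1))
    (hacyc : ∀ n : ℤ, 1 ≤ n → LinearMap.ker (M.β n) = ImB M n) :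
    (∀ (n : ℤ) (x : ↥(ImB M n)), M.δ n x.1 ∈ ImB M (n + 1)) ∧
    (∀ (n : ℤ) (x : ↥(ImB M n)), plusD M n (jImB M n x) = jImB M (n + 1) (dImB M n x)) ∧
    (∀ r : ℤ, Function.Bijective (Hmap₂ (dImB M) (plusD M) r r (jImB M r))) := by
  refine ⟨fun n x => δ_mem n x.1 x.2, fun n x => j_comm rfl x, fun r => ?_⟩
  have hr : r - 1 + 1 = r := by ring
  have hc : cocycles (dImB M) r ≤ (cocycles (plusD M) r).comap (jImB M r) ∧
      cobound (dImB M) r ≤ (cobound (plusD M) r).comap (jImB M r) := by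
    constructor
    · intro x hx
      change plusD M r (jImB M r x) = 0
      have hx' : dImB M r x = 0 := hx
      rw [plusD_plusD_j, hx', map_zero]
    · rintro _ ⟨y, rfl⟩
      exact ⟨jImB M (r - 1) y, j_comm hr y⟩
  unfold Hmap₂
  rw [dif_pos hc]
  constructor
  · rw [← LinearMap.ker_eq_bot, LinearMap.ker_eq_bot']
    intro q hq
    obtain ⟨⟨x, hx⟩, rfl⟩ := Submodule.Quotient.mk_surjective _ q
    rw [Submodule.mapQ_apply, Submodule.Quotient.mk_eq_zero] at hq
    rw [Submodule.Quotient.mk_eq_zero]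
    obtain ⟨η, hη⟩ : jImB M r x ∈ cobound (plusD M) r := hq
    change fcast (κ := κ) (C := plusC M) hr (plusD M (r - 1) η) = jImB M r x at hη
    have hk : ∀ k : ℕ, plusD M (r - 1) η (k + 1) = 0 := by
      have aux : ∀ {s : ℤ} (h : r - 1 + 1 = s) (x : ↥(ImB M s)),
          fcast (κ := κ) (C := plusC M) h (plusD M (r - 1) η) = jImB M s x →
          ∀ k : ℕ, plusD M (r - 1) η (k + 1) = 0 := by
        intro s h x hx k
        subst h
        exact congrFun hx (k + 1)
      exact aux hr x hη
    obtain ⟨ζ, y, hy⟩ := key_plus hsurj hacyc (show r - 1 - 1 + 1 = r - 1 by ring) η hk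
    refine ⟨y, j_inj r ?_⟩
    change jImB M r (fcast (κ := κ) (C := fun n => ↥(ImB M n)) hr (dImB M (r - 1) y)) = jImB M r x
    rw [← j_comm, ← hη, hy, map_add, plusD_sq, add_zero]
  · intro q
    obtain ⟨⟨ω, hω⟩, rfl⟩ := Submodule.Quotient.mk_surjective _ q
    have hω' : plusD M r ω = 0 := hω
    obtain ⟨η, x, hx⟩ := key_plus hsurj hacyc hr ω (fun k => congrFun hω' (k + 1))
    have hxc : dImB M r x = 0 := by
      apply j_inj (r + 1)
      rw [← plusD_plusD_j, map_zero, ← hω', hx, map_add, plusD_sq, add_zero]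
    refine ⟨Submodule.Quotient.mk ⟨x, hxc⟩, ?_⟩
    rw [Submodule.mapQ_apply, Submodule.Quotient.eq]
    change jImB M r x - ω ∈ cobound (plusD M) r
    refine ⟨-η, ?_⟩
    rw [map_neg]
    change - fcast (κ := κ) (C := plusC M) hr (plusD M (r - 1) η) = _
    rw [hx]
    abel

end CDGA
end
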